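/- arXiv:quant-ph/0507045 — 4 statements merged into one kernel-verified Lean document; each statement's English description precedes it below -/
import Mathlib

section
/- Let dB ≤ dC be positive integers, Δ ≥ 0 and ε ≥ 0 real numbers, and K > 1 a real number. Let v : (Fin dB) × (Fin dC) → ℂ be a unit vector with E(v) ≥ logb 2 dB − Δ, and let M : Matrix ((Fin dB) × (Fin dC)) ((Fin dB) × (Fin dC)) ℂ satisfy: M is positive semidefinite, 1 − M is positive semidefinite, and M^Γ is positive semidefinite. If Re (Matrix.trace (φ_v * M)) ≥ 1 − ε, then Re (Matrix.trace M) ≥ (1 − ε − √((Δ + 1)/logb 2 K)) · dB / K. -/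
/-!
Write `r = √((Δ + 1) / log₂ K)`; if `r ≥ 1` the bound is trivial, so let `r < 1`. Let `A` be the
`dB × dC` coefficient matrix of `v`; its squared singular values are the eigenvalues `p i` of the
reduced state `A * Aᴴ`. Shrink each singular value `√(p i)` to `min (√(p i)) (√((1 - r) K / dB))`
and let `y` be the vector with the resulting coefficient matrix `Y`. Three facts are combined.

* PPT bound (`re_dotProduct_le_of_ppt`): the partial transpose of `φ_y` has eigenvalues at most the
  largest squared singular value of `Y`, so positivity of `M^Γ` gives
  `⟨y, M y⟩ ≤ (1 - r) (K / dB) tr M`.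
* Convexity (`re_dotProduct_mulVec_add_le`): as `0 ≤ M ≤ 1`,
  `⟨v, M v⟩ ≤ ⟨y, M y⟩ / (1 - r) + ‖v - y‖² / r`.
* Entropy estimate (`sum_mul_one_sub_shrink_sq_le`): `‖v - y‖² ≤ r²`.

Hence `1 - ε ≤ ⟨v, M v⟩ ≤ (K / dB) tr M + r`, which is the claim.

Cutting off all singular values above `√(K / dB)` by a projection, combined with Markov's inequality
and the gentle measurement bound, loses a constant factor in front of `r`; truncating the singular
values at the smaller level `√((1 - r) K / dB)` and paying for `⟨y, M y⟩` with the factor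
`1 / (1 - r)` avoids this loss. The entropy estimate starts from
`‖v - y‖² ≤ ∑ p i (1 - shrink s K (dB p i))` with `s = √(1 - r)`, and bounds the summands by
nonnegative combinations of `p i` and `p i log (dB p i) + (log 2) / dB ≥ 0`.
Which linear bound is used depends
on the sign of `s (1 + (log K) / 2) - 1`.
-/

open scoped BigOperators Classical ComplexOrder Matrix

noncomputable section

/-- von Neumann entropy in bits of a (Hermitian) matrix, via its eigenvalues. -/
def vnEntropy {n : Type*} [Fintype n] [DecidableEq n] (ρ : Matrix n n ℂ) : ℝ :=
  if h : ρ.IsHermitian then -∑ i, h.eigenvalues i * Real.logb 2 (h.eigenvalues i) else 0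

/-- A density matrix: positive semidefinite with unit trace. -/
def IsDensityMatrix {n : Type*} [Fintype n] [DecidableEq n] (ρ : Matrix n n ℂ) : Prop :=
  ρ.PosSemidef ∧ ρ.trace = 1

/-- Partial trace over the second (C) factor. -/
def ptraceC {dB dC : ℕ} (M : Matrix (Fin dB × Fin dC) (Fin dB × Fin dC) ℂ) :
    Matrix (Fin dB) (Fin dB) ℂ := fun i k => ∑ j, M (i, j) (k, j)

/-- Partial trace over the first (B) factor. -/
def ptraceB {dB dC : ℕ} (M : Matrix (Fin dB × Fin dC) (Fin dB × Fin dC) ℂ) :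
    Matrix (Fin dC) (Fin dC) ℂ := fun j l => ∑ i, M (i, j) (i, l)

/-- Partial transpose (on the second factor). -/
def ptranspose {dB dC : ℕ} (M : Matrix (Fin dB × Fin dC) (Fin dB × Fin dC) ℂ) :
    Matrix (Fin dB × Fin dC) (Fin dB × Fin dC) ℂ := fun p q => M (p.1, q.2) (q.1, p.2)

/-- The pure state (rank-one projector) associated to a vector. -/
def pureState {ι : Type*} (v : ι → ℂ) : Matrix ι ι ℂ := Matrix.vecMulVec v (star v)

/-- A unit vector. -/
def IsUnitVec {ι : Type*} [Fintype ι] (v : ι → ℂ) : Prop := ∑ x, Complex.normSq (v x) = 1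

/-- Entanglement entropy of a bipartite pure state. -/
def entg {dB dC : ℕ} (v : Fin dB × Fin dC → ℂ) : ℝ := vnEntropy (ptraceC (pureState v))

/-- The n-fold tensor power of an isometry `U : A → B ⊗ C`. -/
def tensorPow {dA dB dC : ℕ} (U : Matrix (Fin dB × Fin dC) (Fin dA) ℂ) (n : ℕ) :
    Matrix (Fin n → Fin dB × Fin dC) (Fin n → Fin dA) ℂ :=
  fun f g => ∏ k, U (f k) (g k)

/-- n-fold partial trace over the C factors. -/
def ptraceCn {dB dC n : ℕ}
    (M : Matrix (Fin n → Fin dB × Fin dC) (Fin n → Fin dB × Fin dC) ℂ) :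
    Matrix (Fin n → Fin dB) (Fin n → Fin dB) ℂ :=
  fun fB gB => ∑ fC : Fin n → Fin dC, M (fun k => (fB k, fC k)) (fun k => (gB k, fC k))

/-- n-fold partial transpose over the C factors. -/
def ptransposeN {dB dC n : ℕ}
    (M : Matrix (Fin n → Fin dB × Fin dC) (Fin n → Fin dB × Fin dC) ℂ) :
    Matrix (Fin n → Fin dB × Fin dC) (Fin n → Fin dB × Fin dC) ℂ :=
  fun f g => M (fun k => ((f k).1, (g k).2)) (fun k => ((g k).1, (f k).2))

/-- A POVM on the n-fold space implemented by one-way LOCC from C to B: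
Charlie measures `(M x)` on `C^n`, sends `x`, and Bob measures `(B x i)` on `B^n`. -/
def IsOneWayLOCC {dB dC n N : ℕ}
    (Np : Fin N → Matrix (Fin n → Fin dB × Fin dC) (Fin n → Fin dB × Fin dC) ℂ) : Prop :=
  ∃ (m : ℕ) (M : Fin m → Matrix (Fin n → Fin dC) (Fin n → Fin dC) ℂ)
    (B : Fin m → Fin N → Matrix (Fin n → Fin dB) (Fin n → Fin dB) ℂ),
    (∀ x, (M x).PosSemidef) ∧ (∑ x, M x) = 1 ∧
    (∀ x i, (B x i).PosSemidef) ∧ (∀ x, (∑ i, B x i) = 1) ∧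
    (∀ i f g, Np i f g =
      ∑ x, B x i (fun k => (f k).1) (fun k => (g k).1) * M x (fun k => (f k).2) (fun k => (g k).2))

/-- The rate R is achievable with one-way LOCC (C→B) decoding for the isometry U. -/
def AchievableOneWayCB {dA dB dC : ℕ} (U : Matrix (Fin dB × Fin dC) (Fin dA) ℂ) (R : ℝ) : Prop :=
  ∀ ε : ℝ, 0 < ε → ∃ n₀ : ℕ, ∀ n : ℕ, n₀ ≤ n →
    ∃ (N : ℕ) (φ : Fin N → (Fin n → Fin dB × Fin dC) → ℂ)
      (Np : Fin N → Matrix (Fin n → Fin dB × Fin dC) (Fin n → Fin dB × Fin dC) ℂ),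
      (2 : ℝ) ^ ((n : ℝ) * (R - ε)) ≤ (N : ℝ) ∧
      (∀ i, IsUnitVec (φ i)) ∧
      (∀ i, ∃ ψ, (tensorPow U n).mulVec ψ = φ i) ∧
      IsOneWayLOCC Np ∧
      (∀ i, 1 - ε ≤ (Matrix.trace (pureState (φ i) * Np i)).re)

/-- Base-2 Shannon entropy. -/
def shannonEntropy {ι : Type*} [Fintype ι] (q : ι → ℝ) : ℝ := -∑ x, q x * Real.logb 2 (q x)

/-! ### The entropy estimate -/

lemma one_add_le_sqrt_div {K x : ℝ} (hK : 0 < K) (hx : 0 < x) :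
    1 + (Real.log K - Real.log x) / 2 ≤ √(K / x) := by
  have h : √(K / x) = Real.exp ((Real.log K - Real.log x) / 2) := by
    rw [← Real.log_div hK.ne' hx.ne', ← Real.log_sqrt (by positivity), Real.exp_log (by positivity)]
  rw [h, add_comm]
  exact Real.add_one_le_exp _

/-- `x log x` is bounded below by `-1/2`, hence by `-log 2`; this is the origin of the `+ 1` in
`Δ + 1`. -/
lemma mul_log_add_log_two_nonneg {x : ℝ} (hx : 0 ≤ x) : 0 ≤ x * Real.log x + Real.log 2 := by
  rcases hx.eq_or_lt with rfl | hx
  · simp [Real.log_nonneg]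
  have h := Real.one_sub_inv_le_log_of_pos (show 0 < 2 * x by positivity)
  rw [Real.log_mul two_ne_zero hx.ne'] at h
  have h2 : x * (1 - (2 * x)⁻¹) = x - 1 / 2 := by field_simp
  have h3 := mul_le_mul_of_nonneg_left h hx.le
  have := Real.log_two_gt_d9
  have := Real.log_two_lt_d9
  nlinarith

/-- The factor by which a Schmidt coefficient `√(x / n)` has to be multiplied to become
`min (√(x / n)) (s * √(K / n))`. At `x = 0` division by zero makes the value `0`, which is harmless
since the coefficient itself vanishes. -/
def shrink (s K x : ℝ) : ℝ := min 1 (s * √(K / x))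

lemma shrink_nonneg {s K x : ℝ} (hs : 0 ≤ s) : 0 ≤ shrink s K x :=
  le_min zero_le_one (by positivity)

lemma shrink_sq_mul_le {s K x : ℝ} (hs : 0 ≤ s) (hK : 0 ≤ K) (hx : 0 ≤ x) :
    shrink s K x ^ 2 * x ≤ s ^ 2 * K := by
  rcases hx.eq_or_lt with rfl | hx
  · simp; positivity
  have h : shrink s K x ^ 2 ≤ (s * √(K / x)) ^ 2 :=
    pow_le_pow_left₀ (shrink_nonneg hs) (min_le_right _ _) 2
  rw [mul_pow, Real.sq_sqrt (by positivity)] at h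
  calc _ ≤ s ^ 2 * (K / x) * x := by gcongr
    _ = _ := by field_simp

/-- Here `1 - shrink s K x ≤ max 0 (log x / log K)`: writing `z = log K - log x`, the hypothesis gives
`s * √(K / x) ≥ s * (1 + z / 2) ≥ z / log K` for `0 ≤ z ≤ log K`. -/
lemma mul_one_sub_shrink_le_of_large {s K x : ℝ} (hs : 0 < s) (hK : 1 < K) (hx : 0 ≤ x)
    (h : 1 ≤ s * (1 + Real.log K / 2)) :
    x * (1 - shrink s K x) ≤ (x * Real.log x + Real.log 2) / Real.log K := by
  have hl : 0 < Real.log K := Real.log_pos hK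
  have hent := mul_log_add_log_two_nonneg hx
  have hent' : 0 ≤ (x * Real.log x + Real.log 2) / Real.log K := by positivity
  rcases hx.eq_or_lt with rfl | hx
  · simpa using hent'
  rcases le_total 1 (s * √(K / x)) with hc | hc
  · simpa [shrink, min_eq_left hc] using hent'
  rw [shrink, min_eq_right hc]
  have hexp := mul_le_mul_of_nonneg_left (one_add_le_sqrt_div (by linarith : 0 < K) hx) hs.le
  have hlog2 : 0 < Real.log 2 := Real.log_pos (by norm_num)
  rw [le_div_iff₀ hl]
  -- the term `log 2` is only needed when the shrink factor is `1`; drop it and divide by `x`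
  suffices (1 - s * √(K / x)) * Real.log K ≤ Real.log x by nlinarith
  have h0 : 0 ≤ s * √(K / x) := by positivity
  rcases le_total (Real.log K) (Real.log x) with hxK | hxK
  · nlinarith
  · have hx0 : 0 ≤ Real.log x := by nlinarith
    nlinarith [mul_le_mul_of_nonneg_left hexp hl.le, mul_nonneg (sub_nonneg.2 hxK) hs.le]

/-- In the complementary range the tangent bound `s * √(K / x) ≥ s * (1 + (log K - log x) / 2)` is
used as it stands. -/
lemma mul_one_sub_shrink_le_of_small {s K x : ℝ} (hs : 0 < s) (hK : 1 < K) (hx : 0 ≤ x)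
    (h : s * (1 + Real.log K / 2) ≤ 1) :
    x * (1 - shrink s K x) ≤
      x * (1 - s * (1 + Real.log K / 2)) + s / 2 * (x * Real.log x + Real.log 2) := by
  have hent := mul_nonneg (half_pos hs).le (mul_log_add_log_two_nonneg hx)
  have hlin : 0 ≤ x * (1 - s * (1 + Real.log K / 2)) := mul_nonneg hx (by linarith)
  rcases hx.eq_or_lt with rfl | hx
  · simpa using hent
  rcases le_total 1 (s * √(K / x)) with hc | hc
  · rw [shrink, min_eq_left hc]; linarith
  rw [shrink, min_eq_right hc]
  have hexp := mul_le_mul_of_nonneg_left (one_add_le_sqrt_div (by linarith : 0 < K) hx) hs.le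
  have hlog2 : 0 < Real.log 2 := Real.log_pos (by norm_num)
  nlinarith [mul_le_mul_of_nonneg_left hexp hx.le, mul_pos hs hlog2]

/-- The numerical inequality closing the case `s * (1 + log K / 2) ≤ 1`, with `l = log K`. -/
lemma quartic_bound {s l : ℝ} (hs : 0 ≤ s) (hs1 : s ≤ 1) (hl : 3 / 5 ≤ l) :
    s * (2 - s ^ 2) ≤ 1 + l / 2 * (s ^ 2 * (2 - s ^ 2)) := by
  have h1 : 0 ≤ s ^ 2 * (2 - s ^ 2) := mul_nonneg (sq_nonneg _) (by nlinarith)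
  have h2 : s * (2 - s ^ 2) ≤ 1 + 3 / 10 * (s ^ 2 * (2 - s ^ 2)) := by
    nlinarith [sq_nonneg (s - 4/5), mul_nonneg hs (sq_nonneg (s - 4/5)),
      mul_nonneg hs (sub_nonneg.2 hs1), mul_nonneg (sq_nonneg s) (sub_nonneg.2 hs1), sq_nonneg (s * (s - 1)),
      mul_nonneg (mul_nonneg (mul_nonneg hs hs) hs) (sub_nonneg.2 hs1)]
  nlinarith

/-- The entropy estimate: for a probability vector `p` whose divergence from the uniform distribution
is at most `D`, the squared distance between the Schmidt vector `√p` and its truncation at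
`√((1 - r) K / n)` is at most `r ^ 2 = (D + log 2) / log K`. -/
lemma sum_mul_one_sub_shrink_sq_le {n : ℕ} (hn : 0 < n) {K D r : ℝ} (hK : 1 < K) (hD : 0 ≤ D)
    (hr0 : 0 ≤ r) (hr1 : r < 1) (hr : r ^ 2 * Real.log K = D + Real.log 2)
    (p : Fin n → ℝ) (hp : ∀ i, 0 ≤ p i) (hp1 : ∑ i, p i = 1)
    (hD' : ∑ i, p i * Real.log (n * p i) ≤ D) :
    ∑ i, (1 - shrink (√(1 - r)) K (n * p i)) ^ 2 * p i ≤ r ^ 2 := by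
  have hn' : (0 : ℝ) < n := by exact_mod_cast hn
  have hl : 0 < Real.log K := Real.log_pos hK
  have hlog2 := Real.log_two_gt_d9
  set s := √(1 - r) with hs_def
  have hs : 0 < s := Real.sqrt_pos.2 (by linarith)
  have hs2 : s ^ 2 = 1 - r := Real.sq_sqrt (by linarith)
  have hs1 : s ≤ 1 := by nlinarith
  -- since `r < 1`, the relation `hr` forces `log K > log 2`
  have hl2 : 3 / 5 ≤ Real.log K := by nlinarith
  have hsq : ∑ i, (1 - shrink s K (n * p i)) ^ 2 * p i ≤
      ∑ i, p i * (1 - shrink s K (n * p i)) := by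
    refine Finset.sum_le_sum fun i _ => ?_
    have h0 : 0 ≤ shrink s K (n * p i) := shrink_nonneg hs.le
    have h1 : shrink s K (n * p i) ≤ 1 := min_le_left _ _
    rw [mul_comm]
    exact mul_le_mul_of_nonneg_left (by nlinarith) (hp i)
  refine hsq.trans ?_
  have hconst : ∑ _i : Fin n, Real.log 2 / (n : ℝ) = Real.log 2 := by
    simp; field_simp
  rcases le_total 1 (s * (1 + Real.log K / 2)) with h | h
  · calc ∑ i, p i * (1 - shrink s K (n * p i))
        ≤ ∑ i, (p i * Real.log (n * p i) + Real.log 2 / n) / Real.log K := by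
          refine Finset.sum_le_sum fun i _ => ?_
          have := mul_one_sub_shrink_le_of_large hs hK (mul_nonneg hn'.le (hp i)) h
          rw [← mul_le_mul_iff_right₀ hn']
          refine le_trans (le_of_eq (by ring)) (this.trans (le_of_eq ?_))
          field_simp
      _ = (∑ i, p i * Real.log (n * p i) + Real.log 2) / Real.log K := by
          rw [← Finset.sum_div, Finset.sum_add_distrib, hconst]
      _ ≤ r ^ 2 := by rw [div_le_iff₀ hl]; linarith
  · calc ∑ i, p i * (1 - shrink s K (n * p i))
        ≤ ∑ i, (p i * (1 - s * (1 + Real.log K / 2)) +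
            s / 2 * (p i * Real.log (n * p i) + Real.log 2 / n)) := by
          refine Finset.sum_le_sum fun i _ => ?_
          have := mul_one_sub_shrink_le_of_small hs hK (mul_nonneg hn'.le (hp i)) h
          rw [← mul_le_mul_iff_right₀ hn']
          refine le_trans (le_of_eq (by ring)) (this.trans (le_of_eq ?_))
          field_simp
      _ = (1 - s * (1 + Real.log K / 2)) +
            s / 2 * (∑ i, p i * Real.log (n * p i) + Real.log 2) := by
          rw [Finset.sum_add_distrib, ← Finset.sum_mul, hp1, ← Finset.mul_sum,
            Finset.sum_add_distrib, hconst, one_mul]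
      _ ≤ (1 - s * (1 + Real.log K / 2)) + s / 2 * (r ^ 2 * Real.log K) := by
          gcongr; linarith
      _ ≤ r ^ 2 := by
          have hq := mul_le_mul_of_nonneg_left (quartic_bound hs.le hs1 hl2) hs.le
          have hr' : r = 1 - s ^ 2 := by linarith
          rw [hr']
          linarith

/-! ### Quadratic forms, partial transposes and singular values -/

open Matrix in
/-- The quadratic form of `M` is nonnegative at `r • y - (1 - r) • u`, which bounds the cross terms of
`⟨y + u, M (y + u)⟩`; the remaining form at `u` is at most `‖u‖²` since `M ≤ 1`. -/
lemma re_dotProduct_mulVec_add_le {ι : Type*} [Fintype ι] [DecidableEq ι]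
    {M : Matrix ι ι ℂ} (hM : M.PosSemidef) (hM1 : (1 - M).PosSemidef) {r : ℝ}
    (hr0 : 0 < r) (hr1 : r < 1) (y u : ι → ℂ) :
    (star (y + u) ⬝ᵥ M *ᵥ (y + u)).re ≤
      (star y ⬝ᵥ M *ᵥ y).re / (1 - r) + (star u ⬝ᵥ u).re / r := by
  have h1 := (Complex.le_def.1 (hM1.dotProduct_mulVec_nonneg u)).1
  have h2 := (Complex.le_def.1 (hM.dotProduct_mulVec_nonneg
    ((r : ℂ) • y - ((1 - r : ℝ) : ℂ) • u))).1
  simp only [sub_mulVec, one_mulVec, dotProduct_sub, Complex.zero_re, Complex.sub_re, star_sub,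
    star_smul, mulVec_sub, mulVec_smul, sub_dotProduct, smul_dotProduct, dotProduct_smul,
    smul_eq_mul, RCLike.star_def, Complex.conj_ofReal, Complex.re_ofReal_mul] at h1 h2
  simp only [star_add, mulVec_add, add_dotProduct, dotProduct_add, Complex.add_re]
  set a := (star y ⬝ᵥ M *ᵥ y).re
  set b := (star y ⬝ᵥ M *ᵥ u).re
  set c := (star u ⬝ᵥ M *ᵥ y).re
  set d := (star u ⬝ᵥ M *ᵥ u).re
  have hr1' : 0 < 1 - r := by linarith
  have h3 : d / r ≤ (star u ⬝ᵥ u).re / r := by gcongr; linarith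
  refine le_trans ?_ (add_le_add_right h3 _)
  rw [div_add_div _ _ hr1'.ne' hr0.ne', le_div_iff₀ (by positivity)]
  linarith

lemma trace_pureState_mul {ι : Type*} [Fintype ι] (v : ι → ℂ) (M : Matrix ι ι ℂ) :
    (pureState v * M).trace = star v ⬝ᵥ M *ᵥ v := by
  rw [pureState, Matrix.vecMulVec_mul, Matrix.trace_vecMulVec, Matrix.dotProduct_mulVec,
    dotProduct_comm]

/-- The Cauchy-Schwarz inequality for the Hilbert-Schmidt pairing of `X` with its transpose. -/
lemma re_sum_mul_star_swap_le {κ : Type*} [Fintype κ] (X : Matrix κ κ ℂ) :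
    (∑ j, ∑ l, X j l * star (X l j)).re ≤ ∑ j, ∑ l, Complex.normSq (X j l) := by
  have h : ∀ j l, (X j l * star (X l j)).re ≤
      (Complex.normSq (X j l) + Complex.normSq (X l j)) / 2 := by
    intro j l
    simp only [Complex.normSq_apply, RCLike.star_def, Complex.mul_re, Complex.conj_re,
      Complex.conj_im]
    nlinarith [sq_nonneg ((X j l).re - (X l j).re), sq_nonneg ((X j l).im - (X l j).im)]
  simp only [Complex.re_sum]
  calc _ ≤ ∑ j, ∑ l, (Complex.normSq (X j l) + Complex.normSq (X l j)) / 2 :=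
        Finset.sum_le_sum fun j _ => Finset.sum_le_sum fun l _ => h j l
    _ = _ := by
        simp only [← Finset.sum_div, Finset.sum_add_distrib]
        rw [Finset.sum_comm (f := fun j l => Complex.normSq (X l j))]
        ring

/-- If `M` has positive partial transpose, then `⟨y, M y⟩ ≤ t tr M` whenever the squared singular
values of the coefficient matrix `Y` of `y` are at most `t`. Decomposing `M^Γ` into rank-one terms
with coefficient matrices `n a`, the left side is a sum of pairings of `Yᴴ * n a` with its transpose,
while `tr M = tr M^Γ` is the sum of `‖n a‖²` (Hilbert-Schmidt norm). -/
lemma re_dotProduct_le_of_ppt {dB dC : ℕ} {M : Matrix (Fin dB × Fin dC) (Fin dB × Fin dC) ℂ}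
    (hMΓ : (ptranspose M).PosSemidef) (Y : Matrix (Fin dB) (Fin dC) ℂ) {t : ℝ}
    (hY : ((t : ℂ) • (1 : Matrix (Fin dB) (Fin dB) ℂ) - Y * Yᴴ).PosSemidef) :
    (star (fun p : Fin dB × Fin dC => Y p.1 p.2) ⬝ᵥ
      M *ᵥ (fun p : Fin dB × Fin dC => Y p.1 p.2)).re ≤ t * M.trace.re := by
  obtain ⟨m, w, hw⟩ := Matrix.posSemidef_iff_eq_sum_vecMulVec.1 hMΓ
  have hMe : ∀ i j k l, M (i, j) (k, l) = ∑ a, w a (i, l) * star (w a (k, j)) := by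
    intro i j k l
    have := congrFun (congrFun hw (i, l)) (k, j)
    simpa [ptranspose, Matrix.sum_apply, Matrix.vecMulVec_apply] using this
  let n : Fin m → Matrix (Fin dB) (Fin dC) ℂ := fun a => Matrix.of fun i j => w a (i, j)
  have hone : ∀ a, (∑ j, ∑ l, (Yᴴ * n a) j l * star ((Yᴴ * n a) l j)).re ≤
      t * ((n a)ᴴ * n a).trace.re := by
    intro a
    refine (re_sum_mul_star_swap_le _).trans ?_
    have h := (Complex.le_def.1 (hY.conjTranspose_mul_mul_same (n a)).trace_nonneg).1
    have h2 : (((n a)ᴴ * (Y * Yᴴ) * n a).trace).re =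
        ∑ j, ∑ l, Complex.normSq ((Yᴴ * n a) j l) := by
      have : (n a)ᴴ * (Y * Yᴴ) * n a = (Yᴴ * n a)ᴴ * (Yᴴ * n a) := by
        simp [Matrix.conjTranspose_mul, Matrix.mul_assoc]
      rw [this, Matrix.trace, Complex.re_sum, Finset.sum_comm]
      refine Finset.sum_congr rfl fun l _ => ?_
      rw [Matrix.diag_apply, Matrix.mul_apply, Complex.re_sum]
      refine Finset.sum_congr rfl fun j _ => ?_
      rw [Matrix.conjTranspose_apply, RCLike.star_def, ← Complex.normSq_eq_conj_mul_self,
        Complex.ofReal_re]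
    rw [Matrix.mul_sub, Matrix.sub_mul, Matrix.trace_sub, Complex.sub_re, h2] at h
    simp at h
    linarith
  have htr : M.trace = ∑ a, ((n a)ᴴ * n a).trace := by
    simp only [Matrix.trace, Matrix.diag_apply, Fintype.sum_prod_type, hMe, Matrix.mul_apply,
      Matrix.conjTranspose_apply, n, Matrix.of_apply]
    rw [Finset.sum_comm]
    conv_rhs => rw [Finset.sum_comm]
    refine Finset.sum_congr rfl fun j _ => ?_
    conv_rhs => rw [Finset.sum_comm]
    exact Finset.sum_congr rfl fun i _ => Finset.sum_congr rfl fun a _ => mul_comm _ _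
  have hval : star (fun p : Fin dB × Fin dC => Y p.1 p.2) ⬝ᵥ
      M *ᵥ (fun p : Fin dB × Fin dC => Y p.1 p.2) =
      ∑ a, ∑ j, ∑ l, (Yᴴ * n a) j l * star ((Yᴴ * n a) l j) := by
    simp only [dotProduct, Matrix.mulVec, Fintype.sum_prod_type, hMe, Matrix.mul_apply,
      Matrix.conjTranspose_apply, n, Matrix.of_apply, Pi.star_apply, Finset.mul_sum,
      Finset.sum_mul, star_sum, star_mul', star_star]
    rw [Finset.sum_comm]
    conv_rhs => rw [Finset.sum_comm]
    refine Finset.sum_congr rfl fun j _ => ?_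
    rw [Finset.sum_comm]
    conv_rhs => rw [Finset.sum_comm_cycle]
    refine Finset.sum_congr rfl fun k _ => ?_
    conv_rhs => rw [Finset.sum_comm_cycle]
    refine Finset.sum_congr rfl fun i _ => ?_
    rw [Finset.sum_comm]
    refine Finset.sum_congr rfl fun a _ => Finset.sum_congr rfl fun l _ => ?_
    ring
  rw [hval, htr, Complex.re_sum, Complex.re_sum, Finset.mul_sum]
  exact Finset.sum_le_sum fun a _ => hone a

/-- Multiplying the singular values of `A` by factors `g i`: the matrix used is
`Y = U diag(g) Uᴴ A`, where `U` diagonalizes `A * Aᴴ`. -/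
lemma exists_rescaled_singular_values {dB dC : ℕ} (A : Matrix (Fin dB) (Fin dC) ℂ)
    (hA : (A * Aᴴ).IsHermitian) (g : Fin dB → ℝ) {t : ℝ}
    (ht : ∀ i, g i ^ 2 * hA.eigenvalues i ≤ t) :
    ∃ Y : Matrix (Fin dB) (Fin dC) ℂ,
      ((t : ℂ) • (1 : Matrix (Fin dB) (Fin dB) ℂ) - Y * Yᴴ).PosSemidef ∧
      ((A - Y) * (A - Y)ᴴ).trace.re = ∑ i, (1 - g i) ^ 2 * hA.eigenvalues i := by
  obtain ⟨U, hUU, hUU', hs⟩ : ∃ U : Matrix (Fin dB) (Fin dB) ℂ, U * Uᴴ = 1 ∧ Uᴴ * U = 1 ∧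
      A * Aᴴ = U * Matrix.diagonal (fun i => (hA.eigenvalues i : ℂ)) * Uᴴ :=
    ⟨hA.eigenvectorUnitary, Unitary.coe_mul_star_self _, Unitary.coe_star_mul_self _,
      hA.spectral_theorem⟩
  generalize hA.eigenvalues = e at *
  have key : ∀ f : Fin dB → ℝ, (U * Matrix.diagonal (fun i => (f i : ℂ)) * Uᴴ * A) *
      (U * Matrix.diagonal (fun i => (f i : ℂ)) * Uᴴ * A)ᴴ =
      U * Matrix.diagonal (fun i => ((f i ^ 2 * e i : ℝ) : ℂ)) * Uᴴ := by
    intro f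
    have h1 : (Matrix.diagonal (fun i => (f i : ℂ)))ᴴ = Matrix.diagonal (fun i => (f i : ℂ)) := by
      rw [Matrix.diagonal_conjTranspose]; congr 1; ext i; simp
    calc _ = U * Matrix.diagonal (fun i => (f i : ℂ)) * Uᴴ * (A * Aᴴ) *
          (U * Matrix.diagonal (fun i => (f i : ℂ)) * Uᴴ) := by
          simp only [Matrix.conjTranspose_mul, Matrix.conjTranspose_conjTranspose, h1,
            Matrix.mul_assoc]
      _ = U * Matrix.diagonal (fun i => (f i : ℂ)) * (Uᴴ * U) *
            Matrix.diagonal (fun i => (e i : ℂ)) * (Uᴴ * U) *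
            Matrix.diagonal (fun i => (f i : ℂ)) * Uᴴ := by
          rw [hs]; simp only [Matrix.mul_assoc]
      _ = _ := by
          rw [hUU', Matrix.mul_one, Matrix.mul_one, Matrix.mul_assoc U, Matrix.diagonal_mul_diagonal,
            Matrix.mul_assoc U, Matrix.diagonal_mul_diagonal]
          congr 3
          ext i
          push_cast; ring
  refine ⟨U * Matrix.diagonal (fun i => (g i : ℂ)) * Uᴴ * A, ?_, ?_⟩
  · rw [key g]
    have h1 : (t : ℂ) • (1 : Matrix (Fin dB) (Fin dB) ℂ) =
        U * Matrix.diagonal (fun _ => (t : ℂ)) * Uᴴ := by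
      rw [← Matrix.smul_one_eq_diagonal, Matrix.mul_smul, Matrix.smul_mul, Matrix.mul_one, hUU]
    rw [h1, ← Matrix.sub_mul, ← Matrix.mul_sub, Matrix.diagonal_sub]
    refine Matrix.PosSemidef.mul_mul_conjTranspose_same (Matrix.PosSemidef.diagonal ?_) U
    intro i
    have := sub_nonneg.2 (ht i)
    simp only [Pi.zero_apply]
    exact_mod_cast this
  · have h1 : A - U * Matrix.diagonal (fun i => (g i : ℂ)) * Uᴴ * A =
        U * Matrix.diagonal (fun i => ((1 - g i : ℝ) : ℂ)) * Uᴴ * A := by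
      have : Matrix.diagonal (fun i => ((1 - g i : ℝ) : ℂ)) =
          1 - Matrix.diagonal (fun i => (g i : ℂ)) := by
        rw [← Matrix.diagonal_one, Matrix.diagonal_sub]; simp
      rw [this, Matrix.mul_sub, Matrix.sub_mul, Matrix.sub_mul, Matrix.mul_one, hUU, Matrix.one_mul]
    rw [h1, key, Matrix.trace_mul_cycle, hUU', Matrix.one_mul, Matrix.trace_diagonal,
      Complex.re_sum]
    simp only [Complex.ofReal_re]

/-! ### The trace bound for PPT detectors -/

/-- lemma on PPT detectors, eq. (3): if E(v) ≥ log₂ dB − Δ and M is a PPT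
POVM element detecting φ_v with probability ≥ 1 − ε, then for K > 1,
tr M ≥ (1 − ε − √((Δ+1)/log₂ K))·dB/K. -/
theorem stmt7 (dB dC : ℕ) (hB : 0 < dB) (hBC : dB ≤ dC) (Δ ε K : ℝ)
    (hΔ : 0 ≤ Δ) (hε : 0 ≤ ε) (hK : 1 < K)
    (v : Fin dB × Fin dC → ℂ) (hv : IsUnitVec v)
    (hE : entg v ≥ Real.logb 2 dB - Δ)
    (M : Matrix (Fin dB × Fin dC) (Fin dB × Fin dC) ℂ)
    (hM : M.PosSemidef) (hM1 : (1 - M).PosSemidef) (hMΓ : (ptranspose M).PosSemidef)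
    (htr : 1 - ε ≤ (Matrix.trace (pureState v * M)).re) :
    (1 - ε - Real.sqrt ((Δ + 1) / Real.logb 2 K)) * dB / K ≤ (Matrix.trace M).re := by
  have hB' : (0 : ℝ) < dB := by exact_mod_cast hB
  have hK0 : 0 < K := by linarith
  have hlog2 : 0 < Real.log 2 := Real.log_pos (by norm_num)
  have hlogK : 0 < Real.log K := Real.log_pos hK
  have hLK : 0 < Real.logb 2 K := Real.logb_pos (by norm_num) hK
  have htrM : 0 ≤ M.trace.re := (Complex.le_def.1 hM.trace_nonneg).1
  have hW : 0 < (Δ + 1) / Real.logb 2 K := by positivity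
  set r := √((Δ + 1) / Real.logb 2 K) with hr_def
  have hr0 : 0 < r := Real.sqrt_pos.2 hW
  rcases le_or_gt 1 r with hr1 | hr1
  · -- the left-hand side is nonpositive
    refine le_trans ?_ htrM
    exact div_nonpos_of_nonpos_of_nonneg
      (mul_nonpos_of_nonpos_of_nonneg (by linarith) hB'.le) hK0.le
  have hr1' : 0 < 1 - r := by linarith
  have hr2 : r ^ 2 * Real.log K = Δ * Real.log 2 + Real.log 2 := by
    rw [hr_def, Real.sq_sqrt hW.le, Real.logb]
    field_simp
  -- the coefficient matrix of `v` and the reduced state `A * Aᴴ`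
  let A : Matrix (Fin dB) (Fin dC) ℂ := Matrix.of fun i j => v (i, j)
  have hρ : ptraceC (pureState v) = A * Aᴴ := by
    ext i k
    simp [ptraceC, pureState, Matrix.vecMulVec_apply, Matrix.mul_apply, A]
  have hnorm : ∀ X : Matrix (Fin dB) (Fin dC) ℂ,
      star (fun p : Fin dB × Fin dC => X p.1 p.2) ⬝ᵥ (fun p : Fin dB × Fin dC => X p.1 p.2) =
        (X * Xᴴ).trace := by
    intro X
    simp [dotProduct, Fintype.sum_prod_type, Matrix.trace, Matrix.mul_apply, mul_comm]
  have hPSD : (A * Aᴴ).PosSemidef := Matrix.posSemidef_self_mul_conjTranspose A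
  have hA : (A * Aᴴ).IsHermitian := hPSD.isHermitian
  have hp0 : ∀ i, 0 ≤ hA.eigenvalues i := hPSD.eigenvalues_nonneg
  have hp1 : ∑ i, hA.eigenvalues i = 1 := by
    have h1 : (A * Aᴴ).trace = 1 := by
      rw [← hnorm, dotProduct]
      simp only [A, Matrix.of_apply, Pi.star_apply, RCLike.star_def,
        ← Complex.normSq_eq_conj_mul_self]
      rw [← Complex.ofReal_sum, hv, Complex.ofReal_one]
    rw [hA.trace_eq_sum_eigenvalues] at h1
    apply Complex.ofReal_injective
    rw [Complex.ofReal_sum, Complex.ofReal_one]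
    exact h1
  -- the entropy hypothesis, as a bound on the divergence from the uniform distribution
  have hD : ∑ i, hA.eigenvalues i * Real.log (dB * hA.eigenvalues i) ≤ Δ * Real.log 2 := by
    have h1 : ∀ i, hA.eigenvalues i * Real.log (dB * hA.eigenvalues i) =
        hA.eigenvalues i * Real.log dB +
          hA.eigenvalues i * Real.logb 2 (hA.eigenvalues i) * Real.log 2 := by
      intro i
      rcases (hp0 i).eq_or_lt with h | h
      · simp [← h]
      · rw [Real.log_mul hB'.ne' h.ne', Real.logb]
        field_simp
    have h2 : entg v = -∑ i, hA.eigenvalues i * Real.logb 2 (hA.eigenvalues i) := by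
      rw [entg, hρ, vnEntropy, dif_pos hA]
    rw [h2, Real.logb] at hE
    rw [Finset.sum_congr rfl fun i _ => h1 i, Finset.sum_add_distrib, ← Finset.sum_mul, hp1,
      ← Finset.sum_mul]
    have h3 := mul_le_mul_of_nonneg_right hE hlog2.le
    rw [sub_mul, div_mul_cancel₀ _ hlog2.ne'] at h3
    linarith
  have hs2 : √(1 - r) ^ 2 = 1 - r := Real.sq_sqrt hr1'.le
  obtain ⟨Y, hY, hAY⟩ := exists_rescaled_singular_values A hA
    (fun i => shrink (√(1 - r)) K (dB * hA.eigenvalues i)) (t := (1 - r) * K / dB) (by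
      intro i
      have := shrink_sq_mul_le (Real.sqrt_nonneg (1 - r)) hK0.le (mul_nonneg hB'.le (hp0 i))
      rw [hs2] at this
      rw [le_div_iff₀ hB']
      linarith)
  have hdist := sum_mul_one_sub_shrink_sq_le hB hK (mul_nonneg hΔ hlog2.le) hr0.le hr1 hr2 _
    hp0 hp1 hD
  rw [← hAY, ← hnorm] at hdist
  have hppt := re_dotProduct_le_of_ppt hMΓ Y hY
  have hgm := re_dotProduct_mulVec_add_le hM hM1 hr0 hr1 (fun p : Fin dB × Fin dC => Y p.1 p.2)
    (fun p : Fin dB × Fin dC => (A - Y) p.1 p.2)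
  have hsum : ((fun p : Fin dB × Fin dC => Y p.1 p.2) +
      fun p : Fin dB × Fin dC => (A - Y) p.1 p.2) = v := by
    ext p; simp [A]
  rw [hsum, ← trace_pureState_mul] at hgm
  have h1 : (star (fun p : Fin dB × Fin dC => Y p.1 p.2) ⬝ᵥ
      M *ᵥ (fun p : Fin dB × Fin dC => Y p.1 p.2)).re / (1 - r) ≤ K / dB * M.trace.re := by
    rw [div_le_iff₀ hr1']
    refine hppt.trans (le_of_eq ?_)
    ring
  have h2 : (star (fun p : Fin dB × Fin dC => (A - Y) p.1 p.2) ⬝ᵥ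
      (fun p : Fin dB × Fin dC => (A - Y) p.1 p.2)).re / r ≤ r := by
    rw [div_le_iff₀ hr0]
    linarith
  have h3 : 1 - ε - r ≤ K / dB * M.trace.re := by linarith
  rw [div_le_iff₀ hK0]
  calc (1 - ε - r) * dB ≤ K / dB * M.trace.re * dB := by gcongr
    _ = M.trace.re * K := by field_simp
end
end

section
/- Let d be a positive integer, Δ ≥ 0 and K > 1 real numbers, and p : Fin d → ℝ with p j ≥ 0 for all j and ∑ j, p j = 1. If the Shannon entropy H(p) = −∑ j, p j * Real.logb 2 (p j) satisfies H(p) ≥ logb 2 d − Δ, then ∑_{j : p j > K/d} p j ≤ (Δ + 1)/logb 2 K. -/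
/-! Put `x = d * p j`. The entropy hypothesis says `∑ j, p j * logb 2 (d * p j) ≤ Δ`. In this sum the
indices with `p j > K / d` contribute at least `p j * logb 2 K` each, and every other index
contributes at least `-1 / d`, because `x * logb 2 x ≥ -1` for `x ≥ 0` (`neg_one_le_mul_logb`).
There are at most `d` of the latter, so the weight `P` of the large entries satisfies
`P * logb 2 K - 1 ≤ Δ`. -/

open scoped BigOperators Classical ComplexOrder Matrix

noncomputable section

/-- The minimum of `x * logb 2 x` is `-1 / (e * log 2)`, which exceeds `-1`. -/
lemma neg_one_le_mul_logb {x : ℝ} (hx : 0 ≤ x) : -1 ≤ x * Real.logb 2 x := by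
  rcases hx.eq_or_lt with rfl | hx
  · simp
  have h2 := Real.log_two_gt_d9
  have h3 := Real.log_two_lt_d9
  -- The tangent line of `log` at `1`, taken at `1 / (2 * x)`, gives `x * log x ≥ -1 / 2`.
  have h := Real.one_sub_inv_le_log_of_pos (show 0 < 2 * x by positivity)
  rw [Real.log_mul two_ne_zero hx.ne'] at h
  have hm := mul_le_mul_of_nonneg_left h hx.le
  have e : x * (1 - (2 * x)⁻¹) = x - 1 / 2 := by field_simp
  rw [e] at hm
  rw [Real.logb, ← mul_div_assoc, le_div_iff₀ (by linarith)]
  nlinarith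

/-- A lower bound for each term of `-H(p)`; summed over the `d` indices it gives
`-H(p) ≥ -logb 2 d + P * logb 2 K - 1`, where `P` is the weight of the large entries. -/
lemma mul_logb_lower_bound {d K t : ℝ} (hd : 0 < d) (hK : 1 < K) (ht : 0 ≤ t) :
    (if K / d < t then t else 0) * Real.logb 2 K - 1 / d - t * Real.logb 2 d
      ≤ t * Real.logb 2 t := by
  rcases ht.eq_or_lt with rfl | ht
  · simp [hd.le]
  have hlog : t * Real.logb 2 t = t * Real.logb 2 (d * t) - t * Real.logb 2 d := by
    rw [Real.logb_mul hd.ne' ht.ne']; ring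
  rw [hlog]
  have h1d : 0 < 1 / d := by positivity
  split_ifs with h
  · have hle : Real.logb 2 K ≤ Real.logb 2 (d * t) := by
      apply Real.logb_le_logb_of_le one_lt_two (by linarith)
      rw [div_lt_iff₀ hd] at h
      linarith
    have := mul_le_mul_of_nonneg_left hle ht.le
    linarith
  · have hb := neg_one_le_mul_logb (x := d * t) (by positivity)
    have : -1 / d ≤ t * Real.logb 2 (d * t) := by
      rw [div_le_iff₀ hd]; linarith
    rw [neg_div] at this
    linarith

/-- eq. (6): if a distribution p on Fin d has Shannon entropy
H(p) ≥ log₂ d − Δ, then the total weight of entries exceeding K/d is at most (Δ+1)/log₂ K. -/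
theorem stmt8 (d : ℕ) (hd : 0 < d) (Δ K : ℝ) (hΔ : 0 ≤ Δ) (hK : 1 < K)
    (p : Fin d → ℝ) (hp : ∀ j, 0 ≤ p j) (hpsum : ∑ j, p j = 1)
    (hH : -∑ j, p j * Real.logb 2 (p j) ≥ Real.logb 2 d - Δ) :
    ∑ j ∈ Finset.univ.filter (fun j => K / d < p j), p j ≤ (Δ + 1) / Real.logb 2 K := by
  have hd' : (0 : ℝ) < d := by exact_mod_cast hd
  rw [le_div_iff₀ (Real.logb_pos one_lt_two hK), Finset.sum_filter]
  have h := Finset.sum_le_sum fun j (_ : j ∈ Finset.univ) => mul_logb_lower_bound hd' hK (hp j)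
  rw [Finset.sum_sub_distrib, Finset.sum_sub_distrib, ← Finset.sum_mul, ← Finset.sum_mul,
    hpsum] at h
  have h1 : ∑ _j : Fin d, 1 / (d : ℝ) = 1 := by simp [hd'.ne']
  rw [h1] at h
  linarith
end
end

section
/- Let dB, dC be positive integers, v : (Fin dB) × (Fin dC) → ℂ a unit vector with pure state φ_v, and let λmax be the largest eigenvalue of the reduced density matrix tr_C φ_v. Then for every M : Matrix ((Fin dB) × (Fin dC)) ((Fin dB) × (Fin dC)) ℂ such that both M and M^Γ are positive semidefinite, Re (Matrix.trace (φ_v * M)) ≤ λmax · Re (Matrix.trace M). -/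
/-!
Partial transposition preserves the trace pairing, so `tr (φ_v M) = tr (φ_v^Γ M^Γ)`, and it
preserves the trace, `tr M^Γ = tr M`. Since `M^Γ ≥ 0`, it is enough that `φ_v^Γ ≤ λmax • 1`.

View `v` and a test vector `x` as matrices `V`, `X`. With `A = Vᵀ X̄`, the quadratic form
`⟨x, φ_v^Γ x⟩` is `∑ A l j * conj (A j l)`, which is at most `∑ |A l j|²`
(`re_dotProduct_ptranspose_pureState_le`). The latter sum is `∑ j, ⟨x_j, ρ x_j⟩`, with `x_j` the
columns of `X` and `ρ = tr_C φ_v`, and each term is at most `λmax ‖x_j‖²`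
(`re_dotProduct_mulVec_le_of_eigenvalues_le`).
-/

open scoped BigOperators Classical ComplexOrder Matrix

noncomputable section

theorem re_dotProduct_mulVec_le_of_eigenvalues_le {n : Type*} [Fintype n] [DecidableEq n]
    {ρ : Matrix n n ℂ} (h : ρ.IsHermitian) {c : ℝ} (hc : ∀ i, h.eigenvalues i ≤ c)
    (x : n → ℂ) :
    (star x ⬝ᵥ (ρ *ᵥ x)).re ≤ c * ∑ i, Complex.normSq (x i) := by
  have hpsd : ((c : ℂ) • (1 : Matrix n n ℂ) - ρ).PosSemidef := by
    have hU : (h.eigenvectorUnitary : Matrix n n ℂ) * star (h.eigenvectorUnitary : Matrix n n ℂ) =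
        1 := Unitary.coe_mul_star_self h.eigenvectorUnitary
    have hD : (Matrix.diagonal (fun i => (c : ℂ) - (h.eigenvalues i : ℂ))).PosSemidef := by
      rw [Matrix.posSemidef_diagonal_iff]
      intro i
      rw [sub_nonneg]
      exact_mod_cast hc i
    have key := hD.mul_mul_conjTranspose_same (h.eigenvectorUnitary : Matrix n n ℂ)
    have hsplit : Matrix.diagonal (fun i => (c : ℂ) - (h.eigenvalues i : ℂ)) =
        (c : ℂ) • (1 : Matrix n n ℂ) - Matrix.diagonal (RCLike.ofReal ∘ h.eigenvalues) := by
      rw [Matrix.smul_one_eq_diagonal, Matrix.diagonal_sub]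
      rfl
    have hspec := h.spectral_theorem
    rw [Unitary.conjStarAlgAut_apply] at hspec
    rw [hsplit, mul_sub, sub_mul, ← Matrix.star_eq_conjTranspose, ← hspec, Matrix.mul_smul,
      mul_one, Matrix.smul_mul, hU] at key
    exact key
  have h2 := hpsd.re_dotProduct_nonneg x
  rw [Matrix.sub_mulVec, Matrix.smul_mulVec, Matrix.one_mulVec, dotProduct_sub,
    dotProduct_smul, map_sub, sub_nonneg] at h2
  refine h2.trans (le_of_eq ?_)
  simp [dotProduct, Finset.mul_sum, Complex.normSq_apply]

/-- Writing `A = Vᵀ X̄` for the matrices `V`, `X` with entries `v`, `x`, the quadratic form of the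
partially transposed pure state is `∑ A l j * conj (A j l)`, which by the arithmetic-geometric mean
inequality is at most `∑ |A l j|²`, and this is a sum over the columns of `X` of quadratic forms of
the reduced state. -/
theorem re_dotProduct_ptranspose_pureState_le {dB dC : ℕ} (v x : Fin dB × Fin dC → ℂ) :
    (star x ⬝ᵥ (ptranspose (pureState v) *ᵥ x)).re ≤
      ∑ j, (star (fun i => x (i, j)) ⬝ᵥ
        (ptraceC (pureState v) *ᵥ (fun i => x (i, j)))).re := by
  set A : Fin dC → Fin dC → ℂ := fun l j => ∑ i, v (i, l) * star (x (i, j)) with hA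
  have hform : star x ⬝ᵥ (ptranspose (pureState v) *ᵥ x) =
      ∑ j, ∑ l, A l j * star (A j l) := by
    simp only [hA, star_sum, star_mul', star_star, dotProduct, Matrix.mulVec,
      Fintype.sum_prod_type, ptranspose, pureState, Matrix.vecMulVec_apply, Pi.star_apply,
      Finset.mul_sum, Finset.sum_mul]
    rw [Finset.sum_comm]
    refine Finset.sum_congr rfl fun j _ => ?_
    rw [Finset.sum_comm]
    conv_rhs => rw [Finset.sum_comm]
    refine Finset.sum_congr rfl fun k _ => ?_
    rw [Finset.sum_comm]
    refine Finset.sum_congr rfl fun l _ => Finset.sum_congr rfl fun i _ => ?_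
    ring
  have hred : ∀ j, (star (fun i => x (i, j)) ⬝ᵥ
      (ptraceC (pureState v) *ᵥ (fun i => x (i, j)))).re = ∑ l, Complex.normSq (A l j) := by
    intro j
    have : star (fun i => x (i, j)) ⬝ᵥ (ptraceC (pureState v) *ᵥ (fun i => x (i, j))) =
        ∑ l, A l j * star (A l j) := by
      simp only [hA, star_sum, star_mul', star_star, dotProduct,
        Matrix.mulVec, ptraceC, pureState, Matrix.vecMulVec_apply, Pi.star_apply,
        Finset.mul_sum, Finset.sum_mul]
      rw [Finset.sum_comm]
      conv_rhs => rw [Finset.sum_comm]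
      refine Finset.sum_congr rfl fun k _ => ?_
      rw [Finset.sum_comm]
      refine Finset.sum_congr rfl fun l _ => Finset.sum_congr rfl fun i _ => ?_
      ring
    rw [this, Complex.re_sum]
    refine Finset.sum_congr rfl fun l _ => ?_
    simp [Complex.normSq_apply]
  simp only [hform, hred, Complex.re_sum]
  have hswap : ∑ j, ∑ l, Complex.normSq (A j l) = ∑ j, ∑ l, Complex.normSq (A l j) :=
    Finset.sum_comm
  have hle : ∑ j, ∑ l, (A l j * star (A j l)).re ≤
      ∑ j, ∑ l, (Complex.normSq (A l j) + Complex.normSq (A j l)) / 2 := by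
    refine Finset.sum_le_sum fun j _ => Finset.sum_le_sum fun l _ => ?_
    simp only [Complex.star_def, Complex.mul_re, Complex.conj_re, Complex.conj_im,
      Complex.normSq_apply]
    nlinarith [sq_nonneg ((A l j).re - (A j l).re), sq_nonneg ((A l j).im - (A j l).im)]
  refine hle.trans (le_of_eq ?_)
  simp only [← Finset.sum_div, Finset.sum_add_distrib, hswap]
  ring

theorem re_trace_mul_nonneg {n : Type*} [Fintype n] [DecidableEq n] {K N : Matrix n n ℂ}
    (hK : ∀ x : n → ℂ, 0 ≤ (star x ⬝ᵥ (K *ᵥ x)).re) (hN : N.PosSemidef) :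
    0 ≤ (K * N).trace.re := by
  open scoped MatrixOrder in
  obtain ⟨B, rfl⟩ := CStarAlgebra.nonneg_iff_eq_star_mul_self.mp hN.nonneg
  rw [← mul_assoc, Matrix.trace_mul_comm, Matrix.trace, Complex.re_sum]
  refine Finset.sum_nonneg fun r _ => ?_
  have h := hK (star (B r))
  rw [star_star] at h
  exact h

theorem trace_ptranspose {dB dC : ℕ} (M : Matrix (Fin dB × Fin dC) (Fin dB × Fin dC) ℂ) :
    (ptranspose M).trace = M.trace := rfl

/-- Partial transposition is self-adjoint for the trace pairing. -/
theorem trace_ptranspose_mul_ptranspose {dB dC : ℕ}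
    (P M : Matrix (Fin dB × Fin dC) (Fin dB × Fin dC) ℂ) :
    (ptranspose P * ptranspose M).trace = (P * M).trace := by
  simp only [Matrix.trace, Matrix.diag_apply, Matrix.mul_apply, Fintype.sum_prod_type, ptranspose]
  refine Finset.sum_congr rfl fun i _ => ?_
  rw [Finset.sum_comm]
  conv_lhs => enter [2, k]; rw [Finset.sum_comm]
  rw [Finset.sum_comm]

/-- for a PPT operator M (M ≥ 0 and M^Γ ≥ 0),
tr(φ_v M) ≤ λmax · tr M, where λmax is the largest Schmidt coefficient
(largest eigenvalue of the reduced state tr_C φ_v). -/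
theorem stmt9 (dB dC : ℕ) (hB : 0 < dB) (hC : 0 < dC)
    (v : Fin dB × Fin dC → ℂ) (hv : IsUnitVec v)
    (hherm : (ptraceC (pureState v)).IsHermitian)
    (M : Matrix (Fin dB × Fin dC) (Fin dB × Fin dC) ℂ)
    (hM : M.PosSemidef) (hMΓ : (ptranspose M).PosSemidef) :
    (Matrix.trace (pureState v * M)).re ≤
      (Finset.univ.sup' ⟨(⟨0, hB⟩ : Fin dB), Finset.mem_univ _⟩ hherm.eigenvalues) *
        (Matrix.trace M).re := by
  set c := Finset.univ.sup' ⟨(⟨0, hB⟩ : Fin dB), Finset.mem_univ _⟩ hherm.eigenvalues with hc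
  have hle : ∀ i, hherm.eigenvalues i ≤ c := fun i =>
    Finset.le_sup' hherm.eigenvalues (Finset.mem_univ i)
  have hK : ∀ x : Fin dB × Fin dC → ℂ,
      0 ≤ (star x ⬝ᵥ (((c : ℂ) • 1 - ptranspose (pureState v)) *ᵥ x)).re := by
    intro x
    have h1 := re_dotProduct_ptranspose_pureState_le v x
    have h2 := Finset.sum_le_sum fun j (_ : j ∈ Finset.univ) =>
      re_dotProduct_mulVec_le_of_eigenvalues_le hherm hle (fun i => x (i, j))
    have h3 : (star x ⬝ᵥ ((c : ℂ) • x)).re = ∑ j, c * ∑ i, Complex.normSq (x (i, j)) := by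
      rw [← Finset.mul_sum, Finset.sum_comm, ← Fintype.sum_prod_type']
      simp [dotProduct, Finset.mul_sum, Complex.normSq_apply]
      exact Finset.sum_congr rfl fun _ _ => by ring
    rw [Matrix.sub_mulVec, Matrix.smul_mulVec, Matrix.one_mulVec, dotProduct_sub,
      Complex.sub_re, h3]
    linarith
  have h := re_trace_mul_nonneg hK hMΓ
  rw [sub_mul, Matrix.trace_sub, trace_ptranspose_mul_ptranspose, Matrix.smul_mul, one_mul,
    Matrix.trace_smul, trace_ptranspose, Complex.sub_re, smul_eq_mul, Complex.re_ofReal_mul,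
    sub_nonneg] at h
  exact h
end
end

section
/- Let dA be a positive integer and dB ≤ dC positive integers, U : Matrix ((Fin dB) × (Fin dC)) (Fin dA) ℂ with Uᴴ * U = 1, and δ ≥ 0. Assume that for every n ≥ 1 and every unit vector φ in the range of U^{⊗n}, the entanglement entropy E_n(φ) = S(tr_{C^n} (Matrix.vecMulVec φ (star φ))) satisfies E_n(φ) ≥ n·(logb 2 dB − δ). Then for every sequence of PPT-decoded codes — that is, for each n a positive integer N_n, unit vectors φ_{n,1}, …, φ_{n,N_n} in the range of U^{⊗n}, and matrices M_{n,1}, …, M_{n,N_n} on the index type Fin n → (Fin dB) × (Fin dC), each positive semidefinite with positive semidefinite partial transpose, with 1 − ∑ i, M_{n,i} positive semidefinite, and with max error ε_n := max_i (1 − Re (Matrix.trace (Matrix.vecMulVec φ_{n,i} (star φ_{n,i}) * M_{n,i}))) — if ε_n → 0, then limsup_{n→∞} (1/n) · logb 2 (N_n) ≤ logb 2 dC + δ. -/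
/-!
For a pure bipartite state and an effect `M` with positive semidefinite partial transpose, the
expectation of `M` is at most `t * tr M` when all squared Schmidt coefficients are at most `t`
(`partialTranspose_overlap_le`). So reliable detection of highly entangled states needs effects of
large trace, while the effects of a code have total trace at most `(dB * dC) ^ n`.

The hypothesis bounds entropies and not largest Schmidt coefficients, so the states are truncated:
with cutoff `t = 2 ^ (-n (log dB - δ - η))`, an entropy of at least `n (log dB - δ)` in dimension
`dB ^ n` forces the squared Schmidt coefficients below the cutoff to have a sum `p ≥ η / (2 (δ + η))`,
independent of `n` (`entropy_le_truncated`). Let `x` be the part of the code state below the cutoff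
(`exists_spectral_truncation`). Once the error is at most `p / 4`, the effect has expectation at
least `p ^ 2 / 4` in `x` (`overlap_of_gentle`). Hence every effect has trace at least
`p ^ 2 / (4 t)`, and summing gives `N ≤ (4 / p ^ 2) * t * (dB * dC) ^ n`
(`oneShot_card_bound`), which is the rate bound `log dC + δ + η` as `n → ∞`.
-/


open scoped BigOperators Classical ComplexOrder Matrix

noncomputable section

/-! ### Truncation of the Schmidt spectrum -/

open Matrix in
/-- Schmidt truncation: `X = Q A` with `Q` the spectral projection of `A Aᴴ` onto the eigenvalues at
most `t`. Both `⟨X, A⟩` and `⟨X, X⟩` equal the total weight of these eigenvalues. -/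
lemma exists_spectral_truncation {b c : Type*} [Fintype b] [Fintype c] [DecidableEq b]
    (A : Matrix b c ℂ) (h : (A * Aᴴ).IsHermitian) (t : ℝ) (ht : 0 ≤ t) :
    ∃ X : Matrix b c ℂ, ((t : ℂ) • (1 : Matrix b b ℂ) - X * Xᴴ).PosSemidef ∧
      (Xᴴ * A).trace = ((∑ k with h.eigenvalues k ≤ t, h.eigenvalues k : ℝ) : ℂ) ∧
      (Xᴴ * X).trace = ((∑ k with h.eigenvalues k ≤ t, h.eigenvalues k : ℝ) : ℂ) := by
  set W : Matrix b b ℂ := (h.eigenvectorUnitary : Matrix b b ℂ) with hW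
  have hWW : Wᴴ * W = 1 := Unitary.coe_star_mul_self h.eigenvectorUnitary
  have hWW' : W * Wᴴ = 1 := Unitary.coe_mul_star_self h.eigenvectorUnitary
  have hsp : A * Aᴴ = W * diagonal (fun k => (h.eigenvalues k : ℂ)) * Wᴴ := h.spectral_theorem
  let d : b → ℂ := fun k => if h.eigenvalues k ≤ t then 1 else 0
  set Q : Matrix b b ℂ := W * diagonal d * Wᴴ with hQ
  have hQH : Qᴴ = Q := by
    have : star d = d := by
      funext k; simp only [d, Pi.star_apply]; split_ifs <;> simp
    rw [hQ]
    simp only [conjTranspose_mul, conjTranspose_conjTranspose, diagonal_conjTranspose, this,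
      Matrix.mul_assoc]
  have hQQ : Q * Q = Q := by
    calc Q * Q = W * diagonal d * (Wᴴ * W) * diagonal d * Wᴴ := by
          simp only [hQ, Matrix.mul_assoc]
      _ = W * (diagonal d * diagonal d) * Wᴴ := by
          rw [hWW]; simp only [Matrix.mul_assoc, Matrix.one_mul]
      _ = Q := by
          rw [diagonal_mul_diagonal, hQ]
          congr 3
          funext k; simp only [d]; split_ifs <;> simp
  have hQR : Q * (A * Aᴴ) = W * diagonal (fun k => d k * (h.eigenvalues k : ℂ)) * Wᴴ := by
    calc Q * (A * Aᴴ)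
        = Q * (W * diagonal (fun k => (h.eigenvalues k : ℂ)) * Wᴴ) := congrArg (Q * ·) hsp
      _ = W * diagonal d * (Wᴴ * W) * diagonal (fun k => (h.eigenvalues k : ℂ)) * Wᴴ := by
          simp only [hQ, Matrix.mul_assoc]
      _ = W * (diagonal d * diagonal (fun k => (h.eigenvalues k : ℂ))) * Wᴴ := by
          rw [hWW]; simp only [Matrix.mul_assoc, Matrix.one_mul]
      _ = _ := by rw [diagonal_mul_diagonal]
  have htr : (Q * (A * Aᴴ)).trace
      = ((∑ k with h.eigenvalues k ≤ t, h.eigenvalues k : ℝ) : ℂ) := by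
    rw [hQR, trace_mul_comm, ← Matrix.mul_assoc, hWW, Matrix.one_mul, trace_diagonal,
      Finset.sum_filter]
    push_cast
    refine Finset.sum_congr rfl fun k _ => ?_
    simp only [d]; split_ifs <;> simp
  refine ⟨Q * A, ?_, ?_, ?_⟩
  · have : (t : ℂ) • (1 : Matrix b b ℂ) - (Q * A) * (Q * A)ᴴ
        = W * diagonal (fun k => (t : ℂ) - d k * (h.eigenvalues k : ℂ)) * Wᴴ := by
      have e1 : (Q * A) * (Q * A)ᴴ = W * diagonal (fun k => d k * (h.eigenvalues k : ℂ)) * Wᴴ := by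
        calc (Q * A) * (Q * A)ᴴ = Q * (A * Aᴴ) * Q := by
              rw [conjTranspose_mul, hQH]; simp only [Matrix.mul_assoc]
          _ = W * diagonal (fun k => d k * (h.eigenvalues k : ℂ)) * (Wᴴ * W) * diagonal d * Wᴴ := by
              rw [hQR]; simp only [hQ, Matrix.mul_assoc]
          _ = W * (diagonal (fun k => d k * (h.eigenvalues k : ℂ)) * diagonal d) * Wᴴ := by
              rw [hWW]; simp only [Matrix.mul_assoc, Matrix.one_mul]
          _ = _ := by
              rw [diagonal_mul_diagonal]
              congr 3
              funext k; simp only [d]; split_ifs <;> simp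
      have e2 : (t : ℂ) • (1 : Matrix b b ℂ) = W * diagonal (fun _ => (t : ℂ)) * Wᴴ := by
        rw [← smul_one_eq_diagonal]
        simp [hWW']
      rw [e1, e2, ← Matrix.sub_mul, ← Matrix.mul_sub, diagonal_sub]
    rw [this]
    refine PosSemidef.mul_mul_conjTranspose_same (PosSemidef.diagonal fun k => ?_) W
    simp only [d, Pi.zero_apply]
    split_ifs with hk
    · rw [one_mul, ← Complex.ofReal_sub]
      exact_mod_cast sub_nonneg.2 hk
    · simpa using ht
  · rw [conjTranspose_mul, hQH, Matrix.mul_assoc, trace_mul_comm, Matrix.mul_assoc, htr]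
  · rw [conjTranspose_mul, hQH, Matrix.mul_assoc, ← Matrix.mul_assoc Q Q, hQQ, trace_mul_comm,
      Matrix.mul_assoc, htr]

/-- Atoms above `2 ^ (-r)` contribute at most `r` times their weight to the entropy, and the atoms
below contribute at most `log |b|` times their weight, up to an additive constant. -/
lemma entropy_le_truncated {b : Type*} [Fintype b] (l : b → ℝ) (h0 : ∀ k, 0 ≤ l k)
    (h1 : ∑ k, l k = 1) (r : ℝ) :
    -∑ k, l k * Real.logb 2 (l k) ≤
      (1 - ∑ k with l k ≤ (2 : ℝ) ^ (-r), l k) * r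
        + (∑ k with l k ≤ (2 : ℝ) ^ (-r), l k) * Real.logb 2 (Fintype.card b) + 2 := by
  have hcard : (0 : ℝ) < Fintype.card b := by
    have : Nonempty b := by
      by_contra hb
      rw [not_nonempty_iff] at hb
      simp at h1
    exact_mod_cast Fintype.card_pos
  set D : ℝ := (Fintype.card b : ℝ) with hD
  have hl2 : (1 : ℝ) / 2 ≤ Real.log 2 := by
    have := Real.log_two_gt_d9
    linarith
  have key : ∀ k, -(l k * Real.logb 2 (l k)) ≤
      (if l k ≤ (2 : ℝ) ^ (-r) then l k * Real.logb 2 D else l k * r) + 2 / D := by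
    intro k
    split_ifs with hk
    · rcases (h0 k).eq_or_lt with hz | hz
      · rw [← hz]; simp; positivity
      -- from `log x ≤ x - 1` at `x = 1 / (λ D)`
      have h := Real.log_le_sub_one_of_pos (x := 1 / (l k * D)) (by positivity)
      rw [Real.log_div one_ne_zero (by positivity), Real.log_mul hz.ne' hcard.ne',
        Real.log_one] at h
      have h' : l k * (0 - (Real.log (l k) + Real.log D)) ≤ 1 / D := by
        calc _ ≤ l k * (1 / (l k * D) - 1) := mul_le_mul_of_nonneg_left h hz.le
          _ = 1 / D - l k := by field_simp
          _ ≤ 1 / D := by linarith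
      have h2 : l k * (0 - (Real.log (l k) + Real.log D)) ≤ (2 / D) * Real.log 2 := by
        refine h'.trans ?_
        have : 1 / D = (2 / D) * (1 / 2) := by ring
        rw [this]
        gcongr
      rw [← div_le_iff₀ (by linarith)] at h2
      have e : l k * (0 - (Real.log (l k) + Real.log D)) / Real.log 2
          = -(l k * Real.logb 2 (l k)) - l k * Real.logb 2 D := by
        simp only [Real.logb]; ring
      linarith
    · push Not at hk
      have : -r ≤ Real.logb 2 (l k) := by
        rw [Real.le_logb_iff_rpow_le (by norm_num) (lt_trans (by positivity) hk)]
        exact hk.le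
      have h2 := mul_le_mul_of_nonneg_left this (h0 k)
      have : 0 ≤ 2 / D := by positivity
      linarith
  have hsplit := Finset.sum_filter_add_sum_filter_not Finset.univ
    (fun k => l k ≤ (2 : ℝ) ^ (-r)) l
  rw [h1] at hsplit
  rw [← Finset.sum_neg_distrib]
  refine (Finset.sum_le_sum fun k _ => key k).trans ?_
  rw [Finset.sum_add_distrib, Finset.sum_ite, ← Finset.sum_mul, ← Finset.sum_mul,
    Finset.sum_const, Finset.card_univ, nsmul_eq_mul, ← hD, ← hsplit]
  have : D * (2 / D) = 2 := by field_simp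
  rw [this]
  linarith

open Matrix in
/-- If an effect `M` accepts `φ` with error small compared with the weight `p` of a component `x` of
`φ`, its expectation in `x` is at least `p ^ 2 / 4`: acceptance of `φ` forces
`Re ⟨x, M φ⟩ ≥ p / 2`. -/
lemma overlap_of_gentle {ι : Type*} [Fintype ι] [DecidableEq ι] (M : Matrix ι ι ℂ)
    (hM : M.PosSemidef) (hM1 : (1 - M).PosSemidef) (x φ : ι → ℂ) (p : ℝ)
    (hx : star x ⬝ᵥ x = p) (hxφ : star x ⬝ᵥ φ = p) (hφ : star φ ⬝ᵥ φ = 1)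
    (hacc : 1 - p / 4 ≤ (star φ ⬝ᵥ M *ᵥ φ).re) (hp : 0 ≤ p) :
    p ^ 2 / 4 ≤ (star x ⬝ᵥ M *ᵥ x).re := by
  have expand : ∀ a : ℝ, ∀ B : Matrix ι ι ℂ, B.PosSemidef →
      0 ≤ (star x ⬝ᵥ B *ᵥ x).re - 2 * a * (star x ⬝ᵥ B *ᵥ φ).re
        + a ^ 2 * (star φ ⬝ᵥ B *ᵥ φ).re := by
    intro a B hB
    have h := (Complex.le_def.1 (hB.dotProduct_mulVec_nonneg (x - (a : ℂ) • φ))).1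
    have hsymm : star φ ⬝ᵥ B *ᵥ x = star (star x ⬝ᵥ B *ᵥ φ) := by
      rw [star_dotProduct, star_mulVec, hB.1.eq, ← dotProduct_mulVec]
    have hre : (star φ ⬝ᵥ B *ᵥ x).re = (star x ⬝ᵥ B *ᵥ φ).re := by
      rw [hsymm]; simp
    simp only [star_sub, star_smul, mulVec_sub, mulVec_smul, sub_dotProduct, dotProduct_sub,
      smul_dotProduct, dotProduct_smul, smul_eq_mul, Complex.star_def, Complex.conj_ofReal,
      Complex.sub_re, Complex.re_ofReal_mul, Complex.zero_re, hre] at h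
    nlinarith [h]
  have hφM : (star φ ⬝ᵥ M *ᵥ φ).re ≤ 1 := by
    have h := (Complex.le_def.1 (hM1.dotProduct_mulVec_nonneg φ)).1
    rw [sub_mulVec, dotProduct_sub, one_mulVec, hφ] at h
    simpa using h
  have hx0 := (Complex.le_def.1 (hM.dotProduct_mulVec_nonneg x)).1
  -- Positivity at `x - 2 φ` for `1 - M` bounds the cross term by `p / 2`, and positivity at
  -- `x - (p / 2) φ` for `M` then gives the claim.
  have h1 := expand 2 _ hM1
  have h2 := expand (p / 2) _ hM
  simp only [sub_mulVec, dotProduct_sub, one_mulVec, hx, hxφ, hφ, Complex.sub_re,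
    Complex.ofReal_re, Complex.one_re] at h1
  simp only [Complex.zero_re] at hx0
  have hm : p / 2 ≤ (star x ⬝ᵥ M *ᵥ φ).re := by linarith
  nlinarith [mul_le_mul_of_nonneg_left hm hp, mul_le_mul_of_nonneg_left hφM (sq_nonneg p)]

/-! ### Effects with positive partial transpose -/

lemma sum_reorder {b c κ : Type*} [Fintype b] [Fintype c] [Fintype κ]
    (F : b → c → b → c → κ → ℂ) :
    ∑ x : b × c, ∑ y : b × c, ∑ k, F x.1 x.2 y.1 y.2 k
      = ∑ k, ∑ j, ∑ j', ∑ i', ∑ i, F i j i' j' k := by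
  let e : b × c × b × c × κ ≃ κ × c × c × b × b :=
    { toFun := fun x => (x.2.2.2.2, x.2.1, x.2.2.2.1, x.2.2.1, x.1)
      invFun := fun y => (y.2.2.2.2, y.2.1, y.2.2.2.1, y.2.2.1, y.1)
      left_inv := fun _ => rfl
      right_inv := fun _ => rfl }
  have h := Fintype.sum_equiv e (fun x => F x.1 x.2.1 x.2.2.1 x.2.2.2.1 x.2.2.2.2)
    (fun y => F y.2.2.2.2 y.2.1 y.2.2.2.1 y.2.2.1 y.1) (fun _ => rfl)
  simpa only [Fintype.sum_prod_type] using h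

open Matrix in
/-- A vector `X` with all Schmidt weights at most `t` has expectation at most `t * tr M` in `M` when
the partial transpose `G` of `M` is positive semidefinite. Writing `G = Vᴴ V`, the expectation is
`∑ k, tr (conj Z_k Z_k)` with `Z_k = Xᵀ V_k`, which is at most `∑ k, ‖Z_k‖²` in Frobenius norm, and
`‖Z_k‖² ≤ t ‖V_k‖²` since `X Xᴴ ≤ t`; finally `∑ k, ‖V_k‖² = tr G = tr M`. -/
lemma partialTranspose_overlap_le {b c : Type*} [Fintype b] [Fintype c] [DecidableEq b]
    [DecidableEq c] (M G : Matrix (b × c) (b × c) ℂ) (hG : G.PosSemidef)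
    (hGM : ∀ p q, G p q = M (p.1, q.2) (q.1, p.2)) (X : Matrix b c ℂ) (t : ℝ)
    (hX : ((t : ℂ) • (1 : Matrix b b ℂ) - X * Xᴴ).PosSemidef) :
    (star (fun p : b × c => X p.1 p.2) ⬝ᵥ M *ᵥ (fun p : b × c => X p.1 p.2)).re
      ≤ t * M.trace.re := by
  obtain ⟨V, hV⟩ : ∃ V : Matrix (b × c) (b × c) ℂ, G = Vᴴ * V := by
    open scoped MatrixOrder Matrix.Norms.L2Operator in
    exact CStarAlgebra.nonneg_iff_eq_star_mul_self.mp hG.nonneg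
  have hMV : ∀ i j i' j', M (i, j) (i', j') = ∑ k, star (V k (i, j')) * V k (i', j) := by
    intro i j i' j'
    have := hGM (i, j') (i', j)
    simp only at this
    rw [← this, hV, Matrix.mul_apply]
    rfl
  let Vk : b × c → Matrix b c ℂ := fun k => Matrix.of fun i j => V k (i, j)
  let Z : b × c → Matrix c c ℂ := fun k => Xᵀ * Vk k
  have hform : star (fun p : b × c => X p.1 p.2) ⬝ᵥ M *ᵥ (fun p : b × c => X p.1 p.2)
      = ∑ k, ∑ j, ∑ j', star (Z k j j') * Z k j' j := by
    simp only [dotProduct, mulVec, hMV, Z, Vk, Matrix.mul_apply,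
      Matrix.transpose_apply, Matrix.of_apply, Pi.star_apply, star_sum, star_mul',
      Finset.sum_mul, Finset.mul_sum]
    refine (sum_reorder fun i j i' j' k => star (X i j) *
      (star (V k (i, j')) * V k (i', j) * X i' j')).trans ?_
    refine Finset.sum_congr rfl fun k _ => Finset.sum_congr rfl fun j _ =>
      Finset.sum_congr rfl fun j' _ => Finset.sum_congr rfl fun i' _ =>
      Finset.sum_congr rfl fun i _ => ?_
    ring
  have hZ : ∀ k, (∑ j, ∑ j', star (Z k j j') * Z k j' j).re ≤ ((Z k)ᴴ * Z k).trace.re := by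
    intro k
    have e : ((Z k)ᴴ * Z k).trace = ∑ j, ∑ j', star (Z k j' j) * Z k j' j := by
      simp [Matrix.trace, Matrix.mul_apply]
    have e2 : ((Z k)ᴴ * Z k).trace = ∑ j, ∑ j', star (Z k j j') * Z k j j' := by
      rw [e, Finset.sum_comm]
    have : ∀ j j', 2 * (star (Z k j j') * Z k j' j).re ≤
        (star (Z k j' j) * Z k j' j).re + (star (Z k j j') * Z k j j').re := by
      intro j j'
      simp only [Complex.star_def, Complex.mul_re, Complex.conj_re, Complex.conj_im]
      nlinarith [sq_nonneg ((Z k j j').re - (Z k j' j).re),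
        sq_nonneg ((Z k j j').im - (Z k j' j).im)]
    have hs := Finset.sum_le_sum fun j (_ : j ∈ Finset.univ) =>
      Finset.sum_le_sum fun j' (_ : j' ∈ Finset.univ) => this j j'
    simp only [Finset.sum_add_distrib, ← Finset.mul_sum, ← Complex.re_sum] at hs
    rw [← e, ← e2] at hs
    linarith
  have hZV : ∀ k, ((Z k)ᴴ * Z k).trace.re ≤ t * ((Vk k)ᴴ * Vk k).trace.re := by
    intro k
    have h := (hX.transpose.conjTranspose_mul_mul_same (Vk k)).trace_nonneg
    have e : (Vk k)ᴴ * ((t : ℂ) • (1 : Matrix b b ℂ) - X * Xᴴ)ᵀ * Vk k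
        = (t : ℂ) • ((Vk k)ᴴ * Vk k) - (Z k)ᴴ * Z k := by
      have : (X * Xᴴ)ᵀ = (Xᵀ)ᴴ * Xᵀ := by
        rw [transpose_mul]; rfl
      rw [transpose_sub, this, transpose_smul, transpose_one]
      simp only [Z, Matrix.mul_sub, Matrix.sub_mul, conjTranspose_mul, Matrix.mul_assoc,
        Matrix.mul_smul, Matrix.smul_mul, Matrix.one_mul]
    rw [e, trace_sub, trace_smul] at h
    have h' := (Complex.le_def.1 h).1
    simp only [smul_eq_mul, Complex.sub_re, Complex.re_ofReal_mul, Complex.zero_re] at h'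
    linarith
  have htr : M.trace = ∑ k, ((Vk k)ᴴ * Vk k).trace := by
    simp only [Matrix.trace, Matrix.diag, Matrix.mul_apply, Vk, Matrix.conjTranspose_apply,
      Matrix.of_apply]
    rw [Fintype.sum_prod_type]
    simp only [hMV]
    simp_rw [Finset.sum_comm (s := (Finset.univ : Finset (b × c)))]
    rw [Finset.sum_comm]
  rw [hform, htr, Complex.re_sum, Complex.re_sum, Finset.mul_sum]
  exact Finset.sum_le_sum fun k _ => (hZ k).trans (hZV k)

/-! ### Size of a code -/

open Matrix in
lemma dotProduct_vec_eq_trace {b c : Type*} [Fintype b] [Fintype c] (X A : Matrix b c ℂ) :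
    star (fun p : b × c => X p.1 p.2) ⬝ᵥ (fun p : b × c => A p.1 p.2) = (Xᴴ * A).trace := by
  simp only [dotProduct, Matrix.trace, Matrix.diag, Matrix.mul_apply, Matrix.conjTranspose_apply,
    Pi.star_apply, Fintype.sum_prod_type]
  rw [Finset.sum_comm]

open Matrix in
/-- One-shot converse. The states are the bipartite vectors with coefficient matrices `A i`, all of
entanglement entropy at least `s`, and `G i` is the partial transpose of the effect `M i`.
The number `2 ^ (-r)` is the cutoff on the Schmidt weights; `hsr` makes the part of every state
below the cutoff have weight at least `κ`. -/
theorem oneShot_card_bound {b c ι : Type*} [Fintype b] [Fintype c] [Fintype ι] [DecidableEq b]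
    [DecidableEq c] [DecidableEq ι] (A : ι → Matrix b c ℂ)
    (M G : ι → Matrix (b × c) (b × c) ℂ) (hA : ∀ i, ((A i)ᴴ * A i).trace = 1)
    (s r κ : ℝ) (hs : ∀ i, s ≤ vnEntropy (A i * (A i)ᴴ))
    (hM : ∀ i, (M i).PosSemidef) (hG : ∀ i, (G i).PosSemidef)
    (hGM : ∀ i p q, G i p q = M i (p.1, q.2) (q.1, p.2))
    (hsum : (1 - ∑ i, M i).PosSemidef)
    (hacc : ∀ i, 1 - κ / 4 ≤ (star (fun p : b × c => A i p.1 p.2) ⬝ᵥ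
      M i *ᵥ (fun p : b × c => A i p.1 p.2)).re)
    (hκ : 0 ≤ κ) (hr : r < Real.logb 2 (Fintype.card b))
    (hsr : κ * (Real.logb 2 (Fintype.card b) - r) ≤ s - r - 2) :
    Fintype.card ι * (κ ^ 2 / 4) ≤
      (2 : ℝ) ^ (-r) * (Fintype.card b * Fintype.card c) := by
  have ht : (0 : ℝ) ≤ 2 ^ (-r) := by positivity
  have hone : ∀ i, κ ^ 2 / 4 ≤ 2 ^ (-r) * (M i).trace.re := by
    intro i
    have hps := posSemidef_self_mul_conjTranspose (A i)
    obtain ⟨X, hX, hXA, hXX⟩ := exists_spectral_truncation (A i) hps.1 (2 ^ (-r)) ht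
    have hl1 : ∑ k, hps.1.eigenvalues k = 1 := by
      have h : (A i * (A i)ᴴ).trace = ∑ k, ((hps.1.eigenvalues k : ℝ) : ℂ) :=
        hps.1.trace_eq_sum_eigenvalues
      rw [trace_mul_comm, hA] at h
      exact_mod_cast h.symm
    have hent := entropy_le_truncated _ hps.eigenvalues_nonneg hl1 r
    have hsi := hs i
    rw [vnEntropy, dif_pos hps.1] at hsi
    have hpe := hsi.trans hent
    set p : ℝ := ∑ k with hps.1.eigenvalues k ≤ (2 : ℝ) ^ (-r), hps.1.eigenvalues k with hp
    -- The tail weight `p` is at least `κ`, because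
    -- `κ * (log |b| - r) ≤ s - r - 2 ≤ p * (log |b| - r)`.
    have hκp : κ ≤ p := by
      refine le_of_mul_le_mul_right ?_ (sub_pos.2 hr)
      linarith
    have hMi1 : (1 - M i).PosSemidef := by
      have e : 1 - M i = (1 - ∑ j, M j) + ∑ j ∈ Finset.univ.erase i, M j := by
        rw [← Finset.add_sum_erase Finset.univ M (Finset.mem_univ i)]
        abel
      rw [e]
      exact hsum.add (posSemidef_sum _ fun j _ => hM j)
    have h1 := overlap_of_gentle (M i) (hM i) hMi1 (fun q => X q.1 q.2) (fun q => A i q.1 q.2) p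
      ((dotProduct_vec_eq_trace X X).trans hXX) ((dotProduct_vec_eq_trace X (A i)).trans hXA)
      ((dotProduct_vec_eq_trace (A i) (A i)).trans (hA i)) (by linarith [hacc i])
      (hκ.trans hκp)
    have h2 := partialTranspose_overlap_le (M i) (G i) (hG i) (hGM i) X _ hX
    have h3 : κ ^ 2 ≤ p ^ 2 := by gcongr
    linarith
  have htr : ∑ i, (M i).trace.re ≤ Fintype.card b * Fintype.card c := by
    have h := (Complex.le_def.1 hsum.trace_nonneg).1
    rw [trace_sub, trace_sum, trace_one, Fintype.card_prod] at h
    simpa using h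
  calc Fintype.card ι * (κ ^ 2 / 4) = ∑ _i : ι, κ ^ 2 / 4 := by simp
    _ ≤ ∑ i, 2 ^ (-r) * (M i).trace.re := Finset.sum_le_sum fun i _ => hone i
    _ = 2 ^ (-r) * ∑ i, (M i).trace.re := by rw [Finset.mul_sum]
    _ ≤ _ := mul_le_mul_of_nonneg_left htr ht

open Matrix in
/-- The one-shot converse on `n` copies, with cutoff exponent `r = n (log dB - δ - η)` and tail
weight `κ = η / (2 (δ + η))`. Neither `κ` nor the additive correction depends on `n`, which is why
a fixed small error suffices. -/
lemma nfold_card_bound {dB dC n N : ℕ} (hB : 0 < dB) (hC : 0 < dC) (hn : 1 ≤ n) (hN : 0 < N)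
    (δ η : ℝ) (hδ : 0 ≤ δ) (hη : 0 < η) (hnη : 4 / η ≤ n)
    (φ : Fin N → (Fin n → Fin dB × Fin dC) → ℂ)
    (M : Fin N → Matrix (Fin n → Fin dB × Fin dC) (Fin n → Fin dB × Fin dC) ℂ)
    (hφ : ∀ i, IsUnitVec (φ i))
    (hent : ∀ i, vnEntropy (ptraceCn (pureState (φ i))) ≥ (n : ℝ) * (Real.logb 2 dB - δ))
    (hM : ∀ i, (M i).PosSemidef) (hMΓ : ∀ i, (ptransposeN (M i)).PosSemidef)
    (hMsum : (1 - ∑ i, M i).PosSemidef)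
    (hacc : ∀ i, 1 - η / (2 * (δ + η)) / 4 ≤ (Matrix.trace (pureState (φ i) * M i)).re) :
    Real.logb 2 N ≤ n * (Real.logb 2 dC + δ + η)
      - Real.logb 2 ((η / (2 * (δ + η))) ^ 2 / 4) := by
  set κ : ℝ := η / (2 * (δ + η)) with hκ
  have hκ0 : 0 < κ := by positivity
  have hn0 : (0 : ℝ) < n := by exact_mod_cast hn
  let e := (Equiv.arrowProdEquivProdArrow (Fin n) (fun _ => Fin dB) (fun _ => Fin dC)).symm
  have hdot : ∀ i, star (φ i ∘ e) ⬝ᵥ ((M i).submatrix e e) *ᵥ (φ i ∘ e)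
      = Matrix.trace (pureState (φ i) * M i) := by
    intro i
    rw [pureState, vecMulVec_mul, trace_vecMulVec, dotProduct_comm (φ i), ← dotProduct_mulVec,
      submatrix_mulVec_equiv, Function.comp_assoc, Equiv.self_comp_symm, Function.comp_id]
    exact comp_equiv_dotProduct_comp_equiv (star (φ i)) _ e
  have hlogcard : Real.logb 2 (Fintype.card (Fin n → Fin dB)) = n * Real.logb 2 dB := by
    simp [Real.logb_pow]
  have h := oneShot_card_bound (fun i => Matrix.of fun f g => φ i (e (f, g)))
    (fun i => (M i).submatrix e e) (fun i => (ptransposeN (M i)).submatrix e e)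
    (by
      intro i
      rw [← dotProduct_vec_eq_trace]
      have h1 : star (φ i ∘ e) ⬝ᵥ (φ i ∘ e) = star (φ i) ⬝ᵥ φ i :=
        comp_equiv_dotProduct_comp_equiv (star (φ i)) _ e
      refine Eq.trans h1 ?_
      have h2 := hφ i
      simp only [IsUnitVec] at h2
      simp only [dotProduct, Pi.star_apply, Complex.star_def, ← Complex.normSq_eq_conj_mul_self]
      exact_mod_cast h2)
    (n * (Real.logb 2 dB - δ)) (n * (Real.logb 2 dB - δ - η)) κ
    (fun i => hent i)
    (fun i => (hM i).submatrix e) (fun i => (hMΓ i).submatrix e)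
    (fun i p q => rfl)
    (by
      have := hMsum.submatrix e
      have h2 : (1 - ∑ i, M i).submatrix e e = 1 - ∑ i, (M i).submatrix e e := by
        rw [submatrix_sub]
        change submatrix (1 : Matrix _ _ ℂ) e e - _ = _
        rw [submatrix_one_equiv]
        congr 1
        ext p q
        simp [Matrix.sum_apply]
      rwa [h2] at this)
    (fun i => by
      refine (hacc i).trans (le_of_eq ?_)
      rw [← hdot]
      rfl)
    hκ0.le
    (by
      rw [hlogcard]
      exact mul_lt_mul_of_pos_left (by linarith) hn0)
    (by
      rw [hlogcard]
      have h1 : κ * (n * Real.logb 2 dB - n * (Real.logb 2 dB - δ - η)) = n * η / 2 := by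
        rw [hκ]; field_simp; ring
      rw [div_le_iff₀ hη] at hnη
      rw [h1]
      linarith)
  simp only [Fintype.card_fin, Fintype.card_fun] at h
  push_cast at h
  have hN0 : (0 : ℝ) < N := by exact_mod_cast hN
  have hB0 : (0 : ℝ) < dB := by exact_mod_cast hB
  have hC0 : (0 : ℝ) < dC := by exact_mod_cast hC
  have h' := Real.logb_le_logb_of_le (b := 2) (by norm_num) (by positivity) h
  rw [Real.logb_mul hN0.ne' (by positivity), Real.logb_mul (by positivity) (by positivity),
    Real.logb_mul (by positivity) (by positivity), Real.logb_rpow (by norm_num) (by norm_num),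
    Real.logb_pow, Real.logb_pow] at h'
  linarith

/-- corollary 6: if every unit vector in the range of U^{⊗n} has
entanglement at least n·(log₂ dB − δ), then every sequence of PPT-decoded codes with
vanishing maximal error has asymptotic rate at most log₂ dC + δ. -/
theorem stmt12 (dA dB dC : ℕ) (hA : 0 < dA) (hB : 0 < dB) (hBC : dB ≤ dC)
    (U : Matrix (Fin dB × Fin dC) (Fin dA) ℂ) (hU : Uᴴ * U = 1) (δ : ℝ) (hδ : 0 ≤ δ)
    (hsub : ∀ n : ℕ, 1 ≤ n → ∀ φ : (Fin n → Fin dB × Fin dC) → ℂ,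
      IsUnitVec φ → (∃ ψ, (tensorPow U n).mulVec ψ = φ) →
      vnEntropy (ptraceCn (pureState φ)) ≥ (n : ℝ) * (Real.logb 2 dB - δ))
    (N : ℕ → ℕ) (hN : ∀ n, 0 < N n)
    (φ : ∀ n, Fin (N n) → (Fin n → Fin dB × Fin dC) → ℂ)
    (hφu : ∀ n i, IsUnitVec (φ n i))
    (hφr : ∀ n i, ∃ ψ, (tensorPow U n).mulVec ψ = φ n i)
    (M : ∀ n, Fin (N n) → Matrix (Fin n → Fin dB × Fin dC) (Fin n → Fin dB × Fin dC) ℂ)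
    (hM : ∀ n i, (M n i).PosSemidef)
    (hMΓ : ∀ n i, (ptransposeN (M n i)).PosSemidef)
    (hMsum : ∀ n, (1 - ∑ i, M n i).PosSemidef)
    (ε : ℕ → ℝ)
    (hε : ∀ n, IsGreatest
      (Set.range fun i => 1 - (Matrix.trace (pureState (φ n i) * M n i)).re) (ε n))
    (hε0 : Filter.Tendsto ε Filter.atTop (nhds 0)) :
    Filter.atTop.limsup (fun n : ℕ => (1 / (n : ℝ)) * Real.logb 2 (N n)) ≤
      Real.logb 2 dC + δ := by
  have hC : 0 < dC := hB.trans_le hBC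
  refine le_of_forall_pos_le_add fun η' hη' => ?_
  obtain ⟨η, hη, rfl⟩ : ∃ η : ℝ, 0 < η ∧ η' = 2 * η := ⟨η' / 2, by positivity, by ring⟩
  set K : ℝ := -Real.logb 2 ((η / (2 * (δ + η))) ^ 2 / 4) with hK
  have hκ0 : 0 < η / (2 * (δ + η)) / 4 := by positivity
  refine Filter.limsup_le_of_le ?_ ?_
  -- The limsup is over the reals, so the sequence has to be bounded below for it to be meaningful.
  · refine Filter.IsCoboundedUnder.of_frequently_ge (a := 0)
      (Filter.Frequently.of_forall fun n => ?_)
    have : 0 ≤ Real.logb 2 (N n) :=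
      Real.logb_nonneg (by norm_num) (by exact_mod_cast hN n)
    positivity
  · filter_upwards [Filter.eventually_ge_atTop 1,
      tendsto_natCast_atTop_atTop.eventually_ge_atTop (4 / η),
      tendsto_natCast_atTop_atTop.eventually_ge_atTop (K / η),
      hε0.eventually_le_const hκ0] with n hn hnη hnK hεn
    have h := nfold_card_bound hB hC hn (hN n) δ η hδ hη hnη (φ n) (M n) (hφu n)
      (fun i => hsub n hn _ (hφu n i) (hφr n i)) (hM n) (hMΓ n) (hMsum n)
      (fun i => by
        have := (hε n).2 ⟨i, rfl⟩
        simp only at this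
        linarith)
    have hn0 : (0 : ℝ) < n := by exact_mod_cast hn
    rw [div_le_iff₀ hη] at hnK
    rw [one_div_mul_eq_div, div_le_iff₀ hn0]
    linarith
end
end
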